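/- Suppose the complex-valued potential q satisfies condition A for x ≥ x₀. Then the set 𝒩 of all λ ∈ ℂ such that q−λ satisfies condition A for x ≥ x₀(λ), for some x₀(λ) ≥ 0 depending on λ, is a nonempty open subset of ℂ; in particular 0 ∈ 𝒩. -/

import Mathlib

/-!
The condition on `q` reads `Re p ≥ C + |q'| / (4 |q|)` with `p = √q`, the principal root, so it
is enough to show that it survives, with `C / 2` in place of `C` and the same `x₀`, when `q` is
replaced by `q - μ` with `|μ| < C² / 6` (`CondA.sub_const`); openness of `𝒩` at `lam` is this
statement for the potential `q - lam`.

By continuity of `p` the inequality `Re p ≥ C` holds at every point (`CondA.le_re`). Put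
`r = √(q - μ)`, so that `Re r ≥ 0` and `(r - p) (r + p) = -μ`. Hence `|r - p| ≤ |μ| / C`, which
keeps `Re r` positive and `q - μ` off the cut. Since `|q| ≥ (Re p)²`, the perturbation of the
denominator costs only
`(Re p - C) (|q| / |q - μ| - 1) ≤ Re p · |μ| / ((Re p)² - |μ|) ≤ 2 |μ| / C`,
even though `Re p` may be unbounded. The total loss `3 |μ| / C` is at most `C / 2`.
-/

open MeasureTheory Filter Topology Complex

noncomputable section

/-- The open sector `Π_κ = {z ≠ 0 : arg z ∈ (-π+κ, π-κ)}`. -/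
def PiSector (κ : ℝ) : Set ℂ :=
  {z : ℂ | z ≠ 0 ∧ -Real.pi + κ < z.arg ∧ z.arg < Real.pi - κ}

/-- `f` is locally absolutely continuous on `[a,∞)` with a.e. derivative `f'`:
`f'` is locally integrable there and `f` is recovered from `f'` by integration. -/
def LocACOn (f f' : ℝ → ℂ) (a : ℝ) : Prop :=
  (∀ b, a ≤ b → IntervalIntegrable f' volume a b) ∧
  ∀ x, a ≤ x → f x = f a + ∫ t in a..x, f' t

/-- `y` (with first derivative `y'`) is a solution of `-y'' + q y = f` on `ℝ₊`:
`y, y'` are locally absolutely continuous on `[0,∞)` and the a.e. derivative of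
`y'` equals `q y - f`. -/
def IsSol (q f y y' : ℝ → ℂ) : Prop :=
  LocACOn y y' 0 ∧ LocACOn y' (fun x => q x * y x - f x) 0

/-- `y` is nontrivial on `ℝ₊`. -/
def NontrivialSol (y : ℝ → ℂ) : Prop := ∃ x, 0 ≤ x ∧ y x ≠ 0

/-- membership in the weighted space `L₂(ℝ₊, w)`. -/
def MemL2 (w : ℝ → ℝ) (f : ℝ → ℂ) : Prop :=
  AEStronglyMeasurable f (volume.restrict (Set.Ici (0:ℝ))) ∧
  IntegrableOn (fun x => w x * ‖f x‖ ^ 2) (Set.Ici (0:ℝ)) volume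

/-- the branch `p = √q` with positive real part (principal branch). -/
def sqrtQ (q : ℝ → ℂ) (x : ℝ) : ℂ := (q x) ^ ((1 : ℂ) / 2)

/-- the a.e. derivative of `sqrtQ q`, where `q'` is the a.e. derivative of `q`. -/
def sqrtQD (q q' : ℝ → ℂ) (x : ℝ) : ℂ := q' x / (2 * sqrtQ q x)

/-- the weight `ρ = Re p - (1/2)|p'/p|`. -/
def rho (q q' : ℝ → ℂ) (x : ℝ) : ℝ :=
  (sqrtQ q x).re - (1 / 2) * ‖sqrtQD q q' x / sqrtQ q x‖

/-- Condition A for `q` on `[x₀,∞)` with constant `C`, where `q'` is the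
a.e. derivative of `q`: `q ∈ L¹loc(ℝ₊)`, `q` is locally absolutely continuous
on `[x₀,∞)`, `q` takes values in a sector `Π_κ` on `[x₀,∞)`, the branch
`p = √q` has positive real part there, and
`Re p ≥ C + (1/2)|p'/p|` a.e. on `[x₀,∞)`. -/
def CondA (q q' : ℝ → ℂ) (x₀ C : ℝ) : Prop :=
  LocallyIntegrableOn q (Set.Ici (0:ℝ)) volume ∧
  LocACOn q q' x₀ ∧
  (∃ κ, 0 ≤ κ ∧ ∀ x, x₀ ≤ x → q x ∈ PiSector κ) ∧
  (∀ x, x₀ ≤ x → 0 < (sqrtQ q x).re) ∧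
  0 < C ∧
  ∀ᵐ x : ℝ, x₀ ≤ x → C + (1 / 2) * ‖sqrtQD q q' x / sqrtQ q x‖ ≤ (sqrtQ q x).re

/-- The set `𝒩` of spectral parameters `lam` such that `q - lam` satisfies
condition A for `x ≥ x₁(lam)` for some `x₁(lam) ≥ 0` (note `(q - lam)' = q'`). -/
def NSet (q q' : ℝ → ℂ) : Set ℂ :=
  {lam : ℂ | ∃ x₁ C, 0 ≤ x₁ ∧ CondA (fun x => q x - lam) q' x₁ C}

lemma sqrtQ_sq (q : ℝ → ℂ) (x : ℝ) : sqrtQ q x ^ 2 = q x := by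
  simp [sqrtQ]

/-- The polar form of the principal root, which locates it in the right half-plane. -/
lemma cpow_half_re {z : ℂ} (hz : z ≠ 0) :
    (z ^ ((1 : ℂ) / 2)).re = Real.exp (Real.log ‖z‖ / 2) * Real.cos (z.arg / 2) := by
  have h : Complex.log z * ((1 : ℂ) / 2) = Complex.log z / 2 := by ring
  rw [Complex.cpow_def_of_ne_zero hz, h, Complex.exp_re]
  simp [Complex.log_re, Complex.log_im]

lemma sqrtQ_re_nonneg (q : ℝ → ℂ) (x : ℝ) : 0 ≤ (sqrtQ q x).re := by
  unfold sqrtQ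
  by_cases hz : q x = 0
  · simp [hz]
  rw [cpow_half_re hz]
  refine mul_nonneg (Real.exp_pos _).le (Real.cos_nonneg_of_mem_Icc ⟨?_, ?_⟩)
  · linarith [Complex.neg_pi_lt_arg (q x)]
  · linarith [Complex.arg_le_pi (q x)]

/-- A positive real part of the root rules out the cut `(-∞, 0]`, where the root is imaginary. -/
lemma mem_PiSector_of_sqrtQ_re_pos {q : ℝ → ℂ} {x : ℝ} (h : 0 < (sqrtQ q x).re) :
    q x ∈ PiSector 0 := by
  have hz : q x ≠ 0 := by
    intro hz
    simp [sqrtQ, hz] at h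
  refine ⟨hz, by simpa using Complex.neg_pi_lt_arg (q x), ?_⟩
  refine lt_of_le_of_ne (by simpa using Complex.arg_le_pi (q x)) fun harg => ?_
  rw [sqrtQ, cpow_half_re hz, harg] at h
  simp at h

/-- `|p' / p| = |q'| / (2 |q|)`; at a zero of `q` both sides are `0` by the convention for
division. -/
lemma norm_sqrtQD_div (q q' : ℝ → ℂ) (x : ℝ) :
    ‖sqrtQD q q' x / sqrtQ q x‖ = ‖q' x‖ / (2 * ‖q x‖) := by
  rw [← sqrtQ_sq q x, sqrtQD, div_div, norm_div, norm_mul, norm_mul, norm_pow]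
  norm_num
  ring

lemma LocACOn.continuousOn {f f' : ℝ → ℂ} {a : ℝ} (h : LocACOn f f' a) :
    ContinuousOn f (Set.Ici a) := by
  intro x hx
  have hx' : a ≤ x := hx
  have hab : a ≤ x + 1 := by linarith
  have h1 := intervalIntegral.continuousOn_primitive_interval'
    (h.1 (x + 1) hab) Set.left_mem_uIcc
  rw [Set.uIcc_of_le hab] at h1
  have h2 : ContinuousOn f (Set.Icc a (x + 1)) :=
    (continuousOn_const.add h1).congr fun y hy => h.2 y hy.1
  have h3 := h2 x ⟨hx', by linarith⟩
  refine h3.mono_of_mem_nhdsWithin ?_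
  have h4 : Set.Iic (x + 1) ∈ 𝓝 x := Iic_mem_nhds (by linarith)
  exact inter_mem_nhdsWithin (Set.Ici a) h4

/-- The almost everywhere bound gives `Re p ≥ C` everywhere, as `p` is continuous. -/
lemma CondA.le_re {q q' : ℝ → ℂ} {x₀ C : ℝ} (h : CondA q q' x₀ C) {x : ℝ} (hx : x₀ ≤ x) :
    C ≤ (sqrtQ q x).re := by
  obtain ⟨-, hac, -, hpos, -, hae⟩ := h
  have hdense := Measure.dense_of_ae hae
  have hcl := hdense.open_subset_closure_inter (isOpen_Ioi (a := x))
  have hcl' : x ∈ closure (Set.Ioi x ∩ {y | x₀ ≤ y →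
      C + (1 / 2) * ‖sqrtQD q q' y / sqrtQ q y‖ ≤ (sqrtQ q y).re}) := by
    have := closure_minimal hcl isClosed_closure
    rw [closure_Ioi] at this
    exact this Set.self_mem_Ici
  have hslit : q x ∈ Complex.slitPlane := by
    obtain ⟨h0, -, h2⟩ := mem_PiSector_of_sqrtQ_re_pos (hpos x hx)
    rw [Complex.mem_slitPlane_iff_arg]
    exact ⟨by linarith, h0⟩
  have hcont : ContinuousWithinAt (fun y => (sqrtQ q y).re) (Set.Ici x₀) x :=
    Complex.continuous_re.continuousAt.comp_continuousWithinAt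
      ((hac.continuousOn x hx).cpow continuousWithinAt_const hslit)
  have hmem := (hcont.mono fun y hy => hx.trans (le_of_lt hy.1)).mem_closure hcl'
    (t := Set.Ici C) fun y hy => by
      have h1 := hy.2 (hx.trans (le_of_lt hy.1))
      have h2 : 0 ≤ (1 / 2) * ‖sqrtQD q q' y / sqrtQ q y‖ := by positivity
      exact Set.mem_Ici.2 (le_trans (by linarith) h1)
  rwa [closure_Ici] at hmem

lemma sqrtQ_sub_re_ge {q : ℝ → ℂ} {x C : ℝ} (hC : 0 < C) (hx : C ≤ (sqrtQ q x).re) (μ : ℂ) :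
    (sqrtQ q x).re - ‖μ‖ / C ≤ (sqrtQ (fun y => q y - μ) x).re := by
  set p := sqrtQ q x with hp
  set r := sqrtQ (fun y => q y - μ) x with hr
  have hprod : (p - r) * (p + r) = μ := by
    have h1 : p ^ 2 = q x := sqrtQ_sq q x
    have h2 : r ^ 2 = q x - μ := sqrtQ_sq (fun y => q y - μ) x
    linear_combination h1 - h2
  have hsum : C ≤ ‖p + r‖ := by
    have h1 : 0 ≤ r.re := sqrtQ_re_nonneg _ _
    have h2 := Complex.re_le_norm (p + r)
    rw [Complex.add_re] at h2
    linarith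
  have hdiff : ‖p - r‖ ≤ ‖μ‖ / C := by
    rw [le_div_iff₀ hC, ← hprod, norm_mul]
    gcongr
  have h3 := Complex.re_le_norm (p - r)
  rw [Complex.sub_re] at h3
  linarith

/-- The real inequality behind the perturbation of `|q'| / (4 |q|)`, with `P = Re p`, `N = |q|`,
`M = |q - μ|`, `D = |q'|` and `m = |μ|`. -/
lemma perturb_bound {P N M D m C : ℝ} (hC : 0 < C) (hP : C ≤ P)
    (hm : m ≤ C ^ 2 / 6) (hm0 : 0 ≤ m) (hN : P ^ 2 ≤ N) (hNM : N ≤ M + m)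
    (hD : C + (1 / 2) * (D / (2 * N)) ≤ P) :
    (1 / 2) * (D / (2 * M)) ≤ P - C + 2 * m / C := by
  have hP0 : 0 < P := hC.trans_le hP
  have hN0 : 0 < N := lt_of_lt_of_le (by positivity) hN
  have hCP : C ^ 2 ≤ P ^ 2 := by gcongr
  have hM : P ^ 2 / 2 ≤ M := by linarith [sq_nonneg P]
  have hM0 : 0 < M := lt_of_lt_of_le (by positivity) hM
  have hD' : D ≤ 4 * ((P - C) * N) := by
    have h1 : D / (4 * N) ≤ P - C := by
      have : (1 / 2) * (D / (2 * N)) = D / (4 * N) := by ring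
      linarith
    rw [div_le_iff₀ (by positivity)] at h1
    linarith
  have hkey : (P - C) * m ≤ 2 * m / C * M := by
    have h1 : P * C ≤ 2 * M := by nlinarith
    have h2 : 2 * m / C * M = m * (2 * M / C) := by ring
    have h3 : P ≤ 2 * M / C := by rwa [le_div_iff₀ hC]
    rw [h2, mul_comm]
    gcongr
    linarith
  have h4 : (1 / 2) * (D / (2 * M)) = D / (4 * M) := by ring
  rw [h4, div_le_iff₀ (by positivity)]
  nlinarith [mul_le_mul_of_nonneg_left hNM (sub_nonneg.2 hP)]

/-- Stability of condition A under small constant perturbations of the potential. -/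
lemma CondA.sub_const {q q' : ℝ → ℂ} {x₀ C : ℝ} (h : CondA q q' x₀ C) {μ : ℂ}
    (hμ : ‖μ‖ < C ^ 2 / 6) : CondA (fun x => q x - μ) q' x₀ (C / 2) := by
  have hle : ∀ x, x₀ ≤ x → C ≤ (sqrtQ q x).re := fun x hx => h.le_re hx
  obtain ⟨hloc, hac, -, -, hC, hae⟩ := h
  have hμC : ‖μ‖ / C ≤ C / 6 := by
    rw [div_le_iff₀ hC]
    nlinarith
  have hpos : ∀ x, x₀ ≤ x → 0 < (sqrtQ (fun x => q x - μ) x).re := fun x hx => by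
    linarith [sqrtQ_sub_re_ge hC (hle x hx) μ, hle x hx]
  refine ⟨hloc.sub ((locallyIntegrable_const μ).locallyIntegrableOn _), ⟨hac.1, fun x hx => ?_⟩,
    ⟨0, le_rfl, fun x hx => ?_⟩, hpos, by positivity, ?_⟩
  · change q x - μ = q x₀ - μ + _
    rw [hac.2 x hx]
    ring
  · exact mem_PiSector_of_sqrtQ_re_pos (q := fun x => q x - μ) (hpos x hx)
  · filter_upwards [hae] with x hx hx0
    have hD := hx hx0
    rw [norm_sqrtQD_div] at hD ⊢
    have hN : (sqrtQ q x).re ^ 2 ≤ ‖q x‖ := by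
      rw [← sqrtQ_sq q x, norm_pow]
      have := Complex.re_le_norm (sqrtQ q x)
      have : 0 ≤ (sqrtQ q x).re := sqrtQ_re_nonneg q x
      gcongr
    have hNM : ‖q x‖ ≤ ‖q x - μ‖ + ‖μ‖ := by
      simpa using norm_add_le (q x - μ) μ
    have hb := perturb_bound hC (hle x hx0) hμ.le (norm_nonneg μ) hN hNM hD
    have hr := sqrtQ_sub_re_ge hC (hle x hx0) μ
    have h2 : 2 * ‖μ‖ / C = 2 * (‖μ‖ / C) := by ring
    linarith

/-- If `q` satisfies condition A for `x ≥ x₀`, then `𝒩` contains `0`,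
is nonempty and is open in `ℂ`. -/
theorem statement0 (q q' : ℝ → ℂ) (x₀ C : ℝ) (hx₀ : 0 ≤ x₀)
    (hA : CondA q q' x₀ C) :
    (0 : ℂ) ∈ NSet q q' ∧ (NSet q q').Nonempty ∧ IsOpen (NSet q q') := by
  have h0 : (0 : ℂ) ∈ NSet q q' := ⟨x₀, C, hx₀, by simpa using hA⟩
  refine ⟨h0, ⟨0, h0⟩, Metric.isOpen_iff.2 ?_⟩
  rintro lam ⟨x₁, C₁, hx₁, h⟩
  have hC₁ : 0 < C₁ := h.2.2.2.2.1
  refine ⟨C₁ ^ 2 / 6, by positivity, fun lam' hlam' => ⟨x₁, C₁ / 2, hx₁, ?_⟩⟩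
  rw [Metric.mem_ball, dist_eq_norm] at hlam'
  have h' := h.sub_const hlam'
  have heq : (fun x => q x - lam - (lam' - lam)) = fun x => q x - lam' := by
    funext x
    ring
  rwa [heq] at h'
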